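/- Let β₁ and β₂ be strongly equivalent braid words, and let u be the induced bijection between their sets of classical crossings. If two crossings x₁, x₂ of β₁ form a bigon, then u(x₁) and u(x₂) form a bigon in β₂, and the braid words obtained from β₁ and β₂ by the corresponding bigon reductions are again strongly equivalent. -/

import Mathlib

set_option maxHeartbeats 1000000

namespace OneTermBracket

/-- Letters (generators) of free braid words on `n` strands:
`zeta i` is a classical crossing, `tau i` a virtual crossing, `1 ≤ i+1 ≤ n-1`. -/
inductive Letter (n : ℕ) where
  | zeta (i : Fin (n-1))
  | tau  (i : Fin (n-1))
deriving DecidableEq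

namespace Letter

def idx {n : ℕ} : Letter n → Fin (n-1)
  | zeta i => i
  | tau i => i

def isZeta {n : ℕ} : Letter n → Bool
  | zeta _ => true
  | tau _ => false

end Letter

def lo {n : ℕ} (i : Fin (n-1)) : Fin n := ⟨i.1, by have := i.2; omega⟩
def hi {n : ℕ} (i : Fin (n-1)) : Fin n := ⟨i.1 + 1, by have := i.2; omega⟩

/-- The transposition `(i, i+1)` of `{1, …, n}`. -/
def sPerm {n : ℕ} (i : Fin (n-1)) : Equiv.Perm (Fin n) := Equiv.swap (lo i) (hi i)

/-- Each letter acts on positions as the transposition `(i, i+1)`. -/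
def transOf {n : ℕ} (g : Letter n) : Equiv.Perm (Fin n) := sPerm g.idx

/-- The permutation realized by the prefix of length `j` of a braid word,
mapping the top label of a strand to its position at level `j`. -/
def prefPerm {n : ℕ} (w : List (Letter n)) (j : ℕ) : Equiv.Perm (Fin n) :=
  (((w.take j).map transOf).reverse).prod

/-- The permutation `P(β)` of a braid word (top endpoint `k` goes to bottom endpoint `P k`). -/
def permOf {n : ℕ} (w : List (Letter n)) : Equiv.Perm (Fin n) :=
  ((w.map transOf).reverse).prod

/-- The unordered pair of (top labels of the) strands crossing at position `j` of `w`. -/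
def strandsAt {n : ℕ} (w : List (Letter n)) (j : ℕ) : Option (Sym2 (Fin n)) :=
  (w[j]?).map fun g => s((prefPerm w j)⁻¹ (lo g.idx), (prefPerm w j)⁻¹ (hi g.idx))

/-- Component-wise parity determined by a partition `{1,…,n} = N₁ ⊔ N₂` (encoded by
`c : Fin n → Bool`): a classical crossing is odd (`1`) iff its two strands lie in
different parts. Non-classical positions get `0`. -/
def cwParity {n : ℕ} (c : Fin n → Bool) (w : List (Letter n)) (j : ℕ) : ZMod 2 :=
  match w[j]? with
  | some (.zeta i) =>
      if c ((prefPerm w j)⁻¹ (lo i)) = c ((prefPerm w j)⁻¹ (hi i)) then 0 else 1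
  | _ => 0

/-- The defining relations of `F_n` and `FB_n` which do not involve
`ζ_i² = 1` or the classical third Reidemeister move ("strong" moves). -/
inductive RelStrong (n : ℕ) : List (Letter n) → List (Letter n) → Prop
  | tt (i : Fin (n-1)) : RelStrong n [.tau i, .tau i] []
  | virt (i : Fin (n-1)) : RelStrong n [.zeta i, .tau i] [.tau i, .zeta i]
  | far_zz (i j : Fin (n-1)) (h : 2 ≤ Nat.dist i j) :
      RelStrong n [.zeta i, .zeta j] [.zeta j, .zeta i]
  | far_zt (i j : Fin (n-1)) (h : 2 ≤ Nat.dist i j) :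
      RelStrong n [.zeta i, .tau j] [.tau j, .zeta i]
  | far_tt (i j : Fin (n-1)) (h : 2 ≤ Nat.dist i j) :
      RelStrong n [.tau i, .tau j] [.tau j, .tau i]
  | r3v (i j : Fin (n-1)) (h : (j:ℕ) = (i:ℕ) + 1) :
      RelStrong n [.tau i, .tau j, .tau i] [.tau j, .tau i, .tau j]
  | semi (i j : Fin (n-1)) (h : (j:ℕ) = (i:ℕ) + 1) :
      RelStrong n [.tau i, .tau j, .zeta i] [.zeta j, .tau i, .tau j]

/-- The defining relations of `F_n`. -/
inductive RelF (n : ℕ) : List (Letter n) → List (Letter n) → Prop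
  | strong {r1 r2} : RelStrong n r1 r2 → RelF n r1 r2
  | zz (i : Fin (n-1)) : RelF n [.zeta i, .zeta i] []

/-- The defining relations of the free braid group `FB_n`. -/
inductive RelFB (n : ℕ) : List (Letter n) → List (Letter n) → Prop
  | ofF {r1 r2} : RelF n r1 r2 → RelFB n r1 r2
  | r3c (i j : Fin (n-1)) (h : (j:ℕ) = (i:ℕ) + 1) :
      RelFB n [.zeta i, .zeta j, .zeta i] [.zeta j, .zeta i, .zeta j]

/-- One application of a relation from `R` inside a word. -/
def StepOf {n : ℕ} (R : List (Letter n) → List (Letter n) → Prop)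
    (w1 w2 : List (Letter n)) : Prop :=
  ∃ A B r1 r2, R r1 r2 ∧ w1 = A ++ r1 ++ B ∧ w2 = A ++ r2 ++ B

/-- Strong equivalence: all moves of `F_n` except `ζ_i² = 1`. -/
def StrongEq {n : ℕ} (w1 w2 : List (Letter n)) : Prop :=
  Relation.EqvGen (StepOf (RelStrong n)) w1 w2

/-- Equivalence of braid words as elements of `F_n`. -/
def EqF {n : ℕ} (w1 w2 : List (Letter n)) : Prop :=
  Relation.EqvGen (StepOf (RelF n)) w1 w2

/-- Equivalence of braid words as elements of the free braid group `FB_n`. -/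
def EqFB {n : ℕ} (w1 w2 : List (Letter n)) : Prop :=
  Relation.EqvGen (StepOf (RelFB n)) w1 w2

/-- The parity axioms, for a parity `P` defined on the class `C` of braid words.
`P w j` is the parity of the crossing at position `j` of `w` (only classical
positions matter). -/
structure IsParity {n : ℕ} (C : List (Letter n) → Prop)
    (P : List (Letter n) → ℕ → ZMod 2) : Prop where
  /-- Crossings not taking part in a relation keep their parity (part before). -/
  untouched_left : ∀ A B r1 r2, RelFB n r1 r2 →
    C (A ++ r1 ++ B) → C (A ++ r2 ++ B) → ∀ j < A.length,
    P (A ++ r1 ++ B) j = P (A ++ r2 ++ B) j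
  /-- Crossings not taking part in a relation keep their parity (part after). -/
  untouched_right : ∀ A B r1 r2, RelFB n r1 r2 →
    C (A ++ r1 ++ B) → C (A ++ r2 ++ B) → ∀ j < B.length,
    P (A ++ r1 ++ B) (A.length + r1.length + j) = P (A ++ r2 ++ B) (A.length + r2.length + j)
  /-- In commutation-type relations (far commutativity, virtualization), the two
  letters keep their parities. -/
  comm : ∀ A B x y, RelFB n [x, y] [y, x] →
    C (A ++ [x, y] ++ B) → C (A ++ [y, x] ++ B) →
    P (A ++ [x, y] ++ B) A.length = P (A ++ [y, x] ++ B) (A.length + 1) ∧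
    P (A ++ [x, y] ++ B) (A.length + 1) = P (A ++ [y, x] ++ B) A.length
  /-- In a classical second Reidemeister move both crossings have the same parity. -/
  r2c : ∀ A B (i : Fin (n-1)),
    C (A ++ [.zeta i, .zeta i] ++ B) → C (A ++ B) →
    P (A ++ [.zeta i, .zeta i] ++ B) A.length
      = P (A ++ [.zeta i, .zeta i] ++ B) (A.length + 1)
  /-- In a semivirtual move, the classical crossing keeps its parity. -/
  semiv : ∀ A B (i j : Fin (n-1)), (j:ℕ) = (i:ℕ) + 1 →
    C (A ++ [.tau i, .tau j, .zeta i] ++ B) →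
    C (A ++ [.zeta j, .tau i, .tau j] ++ B) →
    P (A ++ [.tau i, .tau j, .zeta i] ++ B) (A.length + 2)
      = P (A ++ [.zeta j, .tau i, .tau j] ++ B) A.length
  /-- In a classical third Reidemeister move the number of odd crossings is even. -/
  r3_even : ∀ A B (i j : Fin (n-1)), (j:ℕ) = (i:ℕ) + 1 →
    C (A ++ [.zeta i, .zeta j, .zeta i] ++ B) →
    C (A ++ [.zeta j, .zeta i, .zeta j] ++ B) →
    P (A ++ [.zeta i, .zeta j, .zeta i] ++ B) A.length
      + P (A ++ [.zeta i, .zeta j, .zeta i] ++ B) (A.length + 1)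
      + P (A ++ [.zeta i, .zeta j, .zeta i] ++ B) (A.length + 2) = 0
  /-- In a classical third Reidemeister move, upper/middle/lower crossings on the
  left correspond to lower/middle/upper crossings on the right with equal parities. -/
  r3_corr : ∀ A B (i j : Fin (n-1)), (j:ℕ) = (i:ℕ) + 1 →
    C (A ++ [.zeta i, .zeta j, .zeta i] ++ B) →
    C (A ++ [.zeta j, .zeta i, .zeta j] ++ B) →
    P (A ++ [.zeta i, .zeta j, .zeta i] ++ B) A.length
      = P (A ++ [.zeta j, .zeta i, .zeta j] ++ B) (A.length + 2) ∧
    P (A ++ [.zeta i, .zeta j, .zeta i] ++ B) (A.length + 1)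
      = P (A ++ [.zeta j, .zeta i, .zeta j] ++ B) (A.length + 1) ∧
    P (A ++ [.zeta i, .zeta j, .zeta i] ++ B) (A.length + 2)
      = P (A ++ [.zeta j, .zeta i, .zeta j] ++ B) A.length

/-- Delete from `w` all classical letters whose parity (given by `par`) is even. -/
def deleteEven {n : ℕ} (w : List (Letter n)) (par : ℕ → ZMod 2) : List (Letter n) :=
  (List.range w.length).filterMap fun j =>
    (w[j]?).bind fun g =>
      match g with
      | .zeta i => if par j = 0 then none else some (.zeta i)
      | .tau i => some (.tau i)

/-- The one-term parity bracket: delete all even classical crossings. -/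
def bracket {n : ℕ} (P : List (Letter n) → ℕ → ZMod 2) (w : List (Letter n)) :
    List (Letter n) :=
  deleteEven w (P w)

/-- Positions of classical crossings of a word. -/
def ZetaPos {n : ℕ} (w : List (Letter n)) : Set ℕ :=
  {j | ∃ i, w[j]? = some (Letter.zeta i)}

/-- The classical crossings at positions `j1 < j2` form a bigon: they lie on the same
pair of strands, and no classical crossing between them lies on either of those strands. -/
def IsBigon {n : ℕ} (w : List (Letter n)) (j1 j2 : ℕ) : Prop :=
  j1 < j2 ∧ j1 ∈ ZetaPos w ∧ j2 ∈ ZetaPos w ∧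
  strandsAt w j1 = strandsAt w j2 ∧
  ∀ k, j1 < k → k < j2 → k ∈ ZetaPos w →
    ∀ e e', strandsAt w j1 = some e → strandsAt w k = some e' → ∀ a ∈ e, a ∉ e'

/-- Delete the letters at two given positions. -/
def delete2 {n : ℕ} (w : List (Letter n)) (j1 j2 : ℕ) : List (Letter n) :=
  (w.eraseIdx (max j1 j2)).eraseIdx (min j1 j2)

/-- One bigon reduction. -/
def BigonStep {n : ℕ} (w w' : List (Letter n)) : Prop :=
  ∃ j1 j2, IsBigon w j1 j2 ∧ w' = delete2 w j1 j2

/-- A word is irreducible if it admits no bigon reduction. -/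
def Irreducible {n : ℕ} (w : List (Letter n)) : Prop := ¬ ∃ j1 j2, IsBigon w j1 j2

/-- Number of classical letters of a word. -/
def countZeta {n : ℕ} (w : List (Letter n)) : ℕ := (w.filter Letter.isZeta).length

/-- `φ` is an isomorphism of the decorated graphs `Γ(w1) ≅ Γ(w2)`, encoded
combinatorially: a bijection of classical crossings preserving the pair of strands
through each crossing, the order of crossings along each strand, and the endpoint
structure (the permutation). -/
structure IsGammaIso {n : ℕ} (w1 w2 : List (Letter n)) (φ : ℕ → ℕ) : Prop where
  maps : ∀ j ∈ ZetaPos w1, φ j ∈ ZetaPos w2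
  inj : ∀ j ∈ ZetaPos w1, ∀ j' ∈ ZetaPos w1, φ j = φ j' → j = j'
  surj : ∀ k ∈ ZetaPos w2, ∃ j ∈ ZetaPos w1, φ j = k
  strands : ∀ j ∈ ZetaPos w1, strandsAt w2 (φ j) = strandsAt w1 j
  order : ∀ j ∈ ZetaPos w1, ∀ j' ∈ ZetaPos w1, j < j' →
    (∃ e e' a, strandsAt w1 j = some e ∧ strandsAt w1 j' = some e' ∧ a ∈ e ∧ a ∈ e') →
    φ j < φ j'
  perm : permOf w1 = permOf w2

/-! ### The groups `F_n` and `FB_n` as presented groups -/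

/-- Generators: `Sum.inl i` is the classical generator `ζ_i`,
`Sum.inr i` is the virtual generator `τ_i`. -/
abbrev GGen (n : ℕ) := Fin (n-1) ⊕ Fin (n-1)

def zg {n : ℕ} (i : Fin (n-1)) : FreeGroup (GGen n) := FreeGroup.of (Sum.inl i)
def tg {n : ℕ} (i : Fin (n-1)) : FreeGroup (GGen n) := FreeGroup.of (Sum.inr i)

/-- The relators of `F_n`. -/
def FRels (n : ℕ) : Set (FreeGroup (GGen n)) :=
  (⋃ i, {zg i * zg i}) ∪ (⋃ i, {tg i * tg i}) ∪
  (⋃ i, {zg i * tg i * (tg i * zg i)⁻¹}) ∪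
  (⋃ (i : Fin (n-1)) (j : Fin (n-1)) (_ : 2 ≤ Nat.dist i j),
    {zg i * zg j * (zg j * zg i)⁻¹, zg i * tg j * (tg j * zg i)⁻¹,
     tg i * tg j * (tg j * tg i)⁻¹}) ∪
  (⋃ (i : Fin (n-1)) (j : Fin (n-1)) (_ : (j:ℕ) = (i:ℕ) + 1),
    {tg i * tg j * tg i * (tg j * tg i * tg j)⁻¹,
     tg i * tg j * zg i * (zg j * tg i * tg j)⁻¹})

/-- The relators of `FB_n`: those of `F_n` together with the classical third
Reidemeister relation. -/
def FBRels (n : ℕ) : Set (FreeGroup (GGen n)) :=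
  FRels n ∪
  (⋃ (i : Fin (n-1)) (j : Fin (n-1)) (_ : (j:ℕ) = (i:ℕ) + 1),
    {zg i * zg j * zg i * (zg j * zg i * zg j)⁻¹})

/-- The group `F_n`. -/
abbrev FGrp (n : ℕ) := PresentedGroup (FRels n)

/-- The free braid group `FB_n`. -/
abbrev FBGrp (n : ℕ) := PresentedGroup (FBRels n)

def zF {n : ℕ} (i : Fin (n-1)) : FGrp n := PresentedGroup.of (Sum.inl i)
def tF {n : ℕ} (i : Fin (n-1)) : FGrp n := PresentedGroup.of (Sum.inr i)

/-- Evaluation of a braid word in `F_n`. -/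
def evalF {n : ℕ} (w : List (Letter n)) : FGrp n :=
  (w.map fun g => match g with
    | Letter.zeta i => zF i
    | Letter.tau i => tF i).prod

/-- For each unordered pair of strands, the mod-2 number of classical letters of `w`
at which these two strands cross (strand labels traced from the top). -/
def crossPar {n : ℕ} : List (Letter n) → Sym2 (Fin n) → ZMod 2
  | [], _ => 0
  | g :: rest, e =>
    (match g with
     | Letter.zeta i => if e = s(lo i, hi i) then (1 : ZMod 2) else 0
     | Letter.tau _ => 0) + crossPar rest (e.map (transOf g))

/-! ### Chord diagrams and the Gaussian parity -/

/-- The setoid on strands given by `SameCycle`; its classes are the orbits of `σ`,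
i.e. the components of the closure. -/
def sameCycleSetoid {n : ℕ} (σ : Equiv.Perm (Fin n)) : Setoid (Fin n) :=
  ⟨σ.SameCycle, ⟨Equiv.Perm.SameCycle.refl σ, Equiv.Perm.SameCycle.symm,
    Equiv.Perm.SameCycle.trans⟩⟩

/-- The rank of a strand in the single cycle of `σ` starting from strand `0`. -/
noncomputable def rankIn {n : ℕ} [NeZero n] (σ : Equiv.Perm (Fin n)) (a : Fin n) : ℕ :=
  ((Function.invFun (fun k : Fin n => (σ ^ (k : ℕ)) 0) a : Fin n) : ℕ)

/-- Coordinates on the core circle of the two endpoints of the chord of the classical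
crossing at position `j` (the circle traverses the strands in the cyclic order of `σ`). -/
noncomputable def chordEnds {n : ℕ} [NeZero n] (w : List (Letter n))
    (σ : Equiv.Perm (Fin n)) (j : ℕ) : ℕ × ℕ :=
  match w[j]? with
  | some (Letter.zeta i) =>
      (rankIn σ ((prefPerm w j)⁻¹ (lo i)) * w.length + j,
       rankIn σ ((prefPerm w j)⁻¹ (hi i)) * w.length + j)
  | _ => (0, 0)

/-- Two chords are linked iff the endpoints of one separate the endpoints of the
other on the core circle. -/
def LinkedChords {n : ℕ} [NeZero n] (w : List (Letter n)) (σ : Equiv.Perm (Fin n))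
    (j k : ℕ) : Prop :=
  Xor' (min (chordEnds w σ j).1 (chordEnds w σ j).2 < (chordEnds w σ k).1 ∧
        (chordEnds w σ k).1 < max (chordEnds w σ j).1 (chordEnds w σ j).2)
       (min (chordEnds w σ j).1 (chordEnds w σ j).2 < (chordEnds w σ k).2 ∧
        (chordEnds w σ k).2 < max (chordEnds w σ j).1 (chordEnds w σ j).2)

/-- The Gaussian parity of the classical crossing at position `j`: the mod-2 number
of chords linked with its chord. Even (`0`) iff linked with evenly many chords. -/
noncomputable def gaussParity {n : ℕ} [NeZero n] (w : List (Letter n))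
    (σ : Equiv.Perm (Fin n)) (j : ℕ) : ZMod 2 :=
  (Nat.card {k : ℕ // k < w.length ∧ k ∈ ZetaPos w ∧ k ≠ j ∧ LinkedChords w σ j k} : ZMod 2)

/-!
A classical crossing can be named by the pair `e` of strands crossing there together with its rank
`k` among the crossings of `e`. A set of names is updated letter by letter while a word is read, and
both sides of a strong relation update it in the same way. Erasing the named crossings turns a
strong relation into a strong relation or into a trivial one, so it preserves strong equivalence for
a fixed set of names. An isomorphism of graphs is increasing on the crossings of each pair, hence
respects names, so corresponding crossings of the two words are erased by the same set of names.
-/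

section AdjacentTranspositions

variable {n : ℕ}

/-- The unordered pair of adjacent positions `(i, i+1)`: where letters of index `i` act, and the
strands crossing at such a letter when it comes first in a word. -/
def adjPair (i : Fin (n - 1)) : Sym2 (Fin n) := s(lo i, hi i)

theorem adjPair_injective : Function.Injective (adjPair (n := n)) := by
  intro i j h
  simp only [adjPair, lo, hi, Sym2.eq_iff, Fin.mk.injEq] at h
  omega

theorem sym2Map_sPerm_involutive (i : Fin (n - 1)) : Function.Involutive (Sym2.map (sPerm i)) := by
  intro e
  rw [Sym2.map_map, ← Equiv.Perm.coe_mul, sPerm, Equiv.swap_mul_self, Equiv.Perm.coe_one,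
    Sym2.map_id, id]

theorem sym2Map_sPerm_eq_iff (i : Fin (n - 1)) {e f : Sym2 (Fin n)} :
    e.map (sPerm i) = f ↔ e = f.map (sPerm i) :=
  (sym2Map_sPerm_involutive i).eq_iff

@[simp]
theorem sym2Map_sPerm_adjPair (i : Fin (n - 1)) : (adjPair i).map (sPerm i) = adjPair i := by
  simp only [adjPair, sPerm, Sym2.map_mk, Equiv.swap_apply_left, Equiv.swap_apply_right,
    Sym2.eq_swap]

theorem sym2Map_transOf_transOf (g : Letter n) (e : Sym2 (Fin n)) :
    (e.map (transOf g)).map (transOf g) = e :=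
  sym2Map_sPerm_involutive g.idx e

theorem sym2Map_transOf_eq_adjPair_iff {g : Letter n} {e : Sym2 (Fin n)} :
    e.map (transOf g) = adjPair g.idx ↔ e = adjPair g.idx := by
  rw [transOf, sym2Map_sPerm_eq_iff, sym2Map_sPerm_adjPair]

theorem add_two_le_or_of_two_le_dist {a b : ℕ} (h : 2 ≤ Nat.dist a b) : a + 2 ≤ b ∨ b + 2 ≤ a := by
  unfold Nat.dist at h
  omega

theorem sPerm_commute_of_far {i j : Fin (n - 1)} (h : 2 ≤ Nat.dist i j) :
    Commute (sPerm i) (sPerm j) := by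
  have hij := add_two_le_or_of_two_le_dist h
  refine (Equiv.Perm.disjoint_swap_swap ?_).commute
  simp only [lo, hi, List.nodup_cons, List.mem_cons, Fin.mk.injEq, List.not_mem_nil,
    List.nodup_nil, or_false, not_or, not_false_eq_true, and_true]
  omega

theorem sym2Map_sPerm_comm_of_far {i j : Fin (n - 1)} (h : 2 ≤ Nat.dist i j) (e : Sym2 (Fin n)) :
    (e.map (sPerm i)).map (sPerm j) = (e.map (sPerm j)).map (sPerm i) := by
  simp only [Sym2.map_map, ← Equiv.Perm.coe_mul, (sPerm_commute_of_far h).eq]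

theorem sym2Map_sPerm_adjPair_of_far {i j : Fin (n - 1)} (h : 2 ≤ Nat.dist i j) :
    (adjPair i).map (sPerm j) = adjPair i := by
  have hij := add_two_le_or_of_two_le_dist h
  simp only [adjPair, Sym2.map_mk, sPerm]
  rw [Equiv.swap_apply_of_ne_of_ne, Equiv.swap_apply_of_ne_of_ne] <;>
    simp only [lo, hi, ne_eq, Fin.mk.injEq] <;> omega

theorem lo_eq_hi {i j : Fin (n - 1)} (h : (j : ℕ) = i + 1) : lo j = hi i := Fin.ext h

theorem lo_ne_hi_of_le {i j : Fin (n - 1)} (h : i ≤ j) : lo i ≠ hi j := by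
  simp only [lo, hi, ne_eq, Fin.mk.injEq]
  omega

theorem sPerm_braid {i j : Fin (n - 1)} (h : (j : ℕ) = i + 1) :
    sPerm i * sPerm j * sPerm i = sPerm j * sPerm i * sPerm j := by
  have hi_ne : lo i ≠ hi i := lo_ne_hi_of_le le_rfl
  have hij_ne : lo i ≠ hi j := lo_ne_hi_of_le (by omega)
  have hj_ne : hi i ≠ hi j := lo_eq_hi h ▸ lo_ne_hi_of_le le_rfl
  rw [sPerm, sPerm, lo_eq_hi h, Equiv.swap_mul_swap_mul_swap hi_ne hij_ne,
    Equiv.swap_comm (lo i) (hi i), Equiv.swap_comm (hi i) (hi j),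
    Equiv.swap_mul_swap_mul_swap hj_ne.symm hij_ne.symm, Equiv.swap_comm]

theorem sym2Map_sPerm_braid {i j : Fin (n - 1)} (h : (j : ℕ) = i + 1) (e : Sym2 (Fin n)) :
    ((e.map (sPerm i)).map (sPerm j)).map (sPerm i) =
      ((e.map (sPerm j)).map (sPerm i)).map (sPerm j) := by
  simp only [Sym2.map_map, ← Equiv.Perm.coe_mul, ← mul_assoc, sPerm_braid h]

theorem sym2Map_sPerm_sPerm_adjPair {i j : Fin (n - 1)} (h : (j : ℕ) = i + 1) :
    ((adjPair i).map (sPerm j)).map (sPerm i) = adjPair j := by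
  have hi_ne : lo i ≠ hi i := lo_ne_hi_of_le le_rfl
  have hij_ne : lo i ≠ hi j := lo_ne_hi_of_le (by omega)
  have hj_ne : hi i ≠ hi j := lo_eq_hi h ▸ lo_ne_hi_of_le le_rfl
  simp only [adjPair, sPerm, lo_eq_hi h, Sym2.map_mk, Equiv.swap_apply_left,
    Equiv.swap_apply_of_ne_of_ne hi_ne hij_ne,
    Equiv.swap_apply_of_ne_of_ne hij_ne.symm hj_ne.symm]

end AdjacentTranspositions

section Crossings

variable {n : ℕ}

/-- The positions of the classical crossings of `w` at which the strands of the pair `e` cross. -/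
def crossingsOf (w : List (Letter n)) (e : Sym2 (Fin n)) : Set ℕ :=
  {j | j ∈ ZetaPos w ∧ strandsAt w j = some e}

open Classical in
/-- The number of crossings of the pair `e` before position `j` of `w`; at a crossing of `e`, its
rank among the crossings of `e`, counted from `0`. -/
noncomputable def crossingRank (w : List (Letter n)) (e : Sym2 (Fin n)) (j : ℕ) : ℕ :=
  Nat.count (· ∈ crossingsOf w e) j

theorem exists_mem_crossingsOf {w : List (Letter n)} {j : ℕ} (hj : j ∈ ZetaPos w) :
    ∃ e, j ∈ crossingsOf w e := by
  obtain ⟨i, hi⟩ := id hj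
  exact ⟨_, hj, by rw [strandsAt, hi, Option.map_some]⟩

theorem crossingRank_injOn (w : List (Letter n)) (e : Sym2 (Fin n)) :
    Set.InjOn (crossingRank w e) (crossingsOf w e) := by
  classical exact fun _ hi _ hj h => Nat.count_injective hi hj h

theorem crossingRank_zero (w : List (Letter n)) (e : Sym2 (Fin n)) : crossingRank w e 0 = 0 := by
  classical exact Nat.count_zero _

theorem zero_mem_crossingsOf_cons {g : Letter n} {w : List (Letter n)} {e : Sym2 (Fin n)} :
    0 ∈ crossingsOf (g :: w) e ↔ g.isZeta ∧ e = adjPair g.idx := by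
  cases g <;>
    simp [crossingsOf, ZetaPos, strandsAt, prefPerm, adjPair, Letter.isZeta,
      ← Equiv.Perm.inv_def, eq_comm]

theorem prefPerm_cons_succ (g : Letter n) (w : List (Letter n)) (j : ℕ) :
    prefPerm (g :: w) (j + 1) = prefPerm w j * transOf g := by
  simp only [prefPerm, List.take_succ_cons, List.map_cons, List.reverse_cons, List.prod_append,
    List.prod_singleton]

theorem strandsAt_cons_succ (g : Letter n) (w : List (Letter n)) (j : ℕ) :
    strandsAt (g :: w) (j + 1) = (strandsAt w j).map (Sym2.map (transOf g)) := by
  have transOf_inv : (transOf g)⁻¹ = transOf g := Equiv.swap_inv _ _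
  simp only [strandsAt, List.getElem?_cons_succ, prefPerm_cons_succ, mul_inv_rev, transOf_inv,
    Equiv.Perm.mul_apply, Option.map_map, Function.comp_def, Sym2.map_mk]

theorem succ_mem_crossingsOf_cons {g : Letter n} {w : List (Letter n)} {e : Sym2 (Fin n)} {j : ℕ} :
    j + 1 ∈ crossingsOf (g :: w) e ↔ j ∈ crossingsOf w (e.map (transOf g)) := by
  simp only [crossingsOf, ZetaPos, Set.mem_ofPred_eq, List.getElem?_cons_succ, strandsAt_cons_succ,
    Option.map_eq_some_iff, transOf, sym2Map_sPerm_eq_iff, exists_eq_right]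

theorem crossingRank_cons_succ (g : Letter n) (w : List (Letter n)) (e : Sym2 (Fin n)) (j : ℕ) :
    crossingRank (g :: w) e (j + 1) =
      crossingRank w (e.map (transOf g)) j + if g.isZeta ∧ e = adjPair g.idx then 1 else 0 := by
  classical
  simp only [crossingRank, Nat.count_succ', succ_mem_crossingsOf_cons, zero_mem_crossingsOf_cons]

end Crossings

section Markings

variable {n : ℕ}

/-- A selection of classical crossings independent of any particular word: `M e` is the set of ranks
of the selected crossings of the pair of strands `e`. -/
abbrev Marking (n : ℕ) := Sym2 (Fin n) → Set ℕ

/-- What remains of the marking `M` after reading the letter `g`: strands are relabelled by their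
positions below `g`, and a classical crossing uses up rank `0` of its pair. -/
def advance (M : Marking n) (g : Letter n) : Marking n := fun e =>
  {k | k + (if g.isZeta ∧ e = adjPair g.idx then 1 else 0) ∈ M (e.map (transOf g))}

theorem mem_advance_tau {M : Marking n} {i : Fin (n - 1)} {e : Sym2 (Fin n)} {k : ℕ} :
    k ∈ advance M (.tau i) e ↔ k ∈ M (e.map (sPerm i)) := by
  simp [advance, Letter.isZeta, transOf, Letter.idx]

theorem mem_advance_zeta {M : Marking n} {i : Fin (n - 1)} {e : Sym2 (Fin n)} {k : ℕ} :
    k ∈ advance M (.zeta i) e ↔ k + (if e = adjPair i then 1 else 0) ∈ M (e.map (sPerm i)) := by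
  simp [advance, Letter.isZeta, transOf, Letter.idx]

open Classical in
/-- The word obtained from `w` by deleting the classical crossings selected by a marking. -/
noncomputable def eraseMarked : List (Letter n) → Marking n → List (Letter n)
  | [], _ => []
  | g :: w, M =>
    (if g.isZeta ∧ 0 ∈ M (adjPair g.idx) then [] else [g]) ++ eraseMarked w (advance M g)

theorem eraseMarked_nil (M : Marking n) : eraseMarked ([] : List (Letter n)) M = [] := rfl

theorem eraseMarked_tau_cons (i : Fin (n - 1)) (w : List (Letter n)) (M : Marking n) :
    eraseMarked (.tau i :: w) M = .tau i :: eraseMarked w (advance M (.tau i)) := by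
  simp [eraseMarked, Letter.isZeta]

open Classical in
theorem eraseMarked_zeta_cons (i : Fin (n - 1)) (w : List (Letter n)) (M : Marking n) :
    eraseMarked (.zeta i :: w) M =
      (if 0 ∈ M (adjPair i) then [] else [.zeta i]) ++ eraseMarked w (advance M (.zeta i)) := by
  simp [eraseMarked, Letter.isZeta, Letter.idx]

theorem eraseMarked_append (v w : List (Letter n)) (M : Marking n) :
    eraseMarked (v ++ w) M = eraseMarked v M ++ eraseMarked w (v.foldl advance M) := by
  induction v generalizing M with
  | nil => rfl
  | cons g v ih =>
    simp only [List.cons_append, eraseMarked, ih, List.foldl_cons, List.append_assoc]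

end Markings

section StrongEquivalence

variable {n : ℕ}

theorem StrongEq.append_append {w₁ w₂ : List (Letter n)} (h : StrongEq w₁ w₂)
    (u v : List (Letter n)) : StrongEq (u ++ w₁ ++ v) (u ++ w₂ ++ v) := by
  induction h with
  | rel _ _ h =>
    obtain ⟨A, B, r₁, r₂, hr, rfl, rfl⟩ := h
    exact .rel _ _ ⟨u ++ A, B ++ v, r₁, r₂, hr, by simp only [List.append_assoc],
      by simp only [List.append_assoc]⟩
  | refl => exact .refl _
  | symm _ _ _ ih => exact .symm _ _ ih
  | trans _ _ _ _ _ ih₁ ih₂ => exact .trans _ _ _ ih₁ ih₂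

theorem RelStrong.strongEq {r₁ r₂ : List (Letter n)} (h : RelStrong n r₁ r₂) : StrongEq r₁ r₂ :=
  .rel _ _ ⟨[], [], r₁, r₂, h, (List.append_nil _).symm, (List.append_nil _).symm⟩

theorem RelStrong.foldl_advance_eq {r₁ r₂ : List (Letter n)} (h : RelStrong n r₁ r₂)
    (M : Marking n) : r₁.foldl advance M = r₂.foldl advance M := by
  ext e k
  cases h with
  | tt i => simp [mem_advance_tau, sym2Map_sPerm_involutive i e]
  | virt i => simp [mem_advance_tau, mem_advance_zeta, sym2Map_sPerm_eq_iff]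
  | far_zz i j h =>
    have h' : 2 ≤ Nat.dist j i := Nat.dist_comm i j ▸ h
    simp [mem_advance_zeta, sym2Map_sPerm_eq_iff, sym2Map_sPerm_adjPair_of_far h,
      sym2Map_sPerm_adjPair_of_far h', sym2Map_sPerm_comm_of_far h, add_right_comm]
  | far_zt i j h =>
    simp [mem_advance_tau, mem_advance_zeta, sym2Map_sPerm_eq_iff, sym2Map_sPerm_adjPair_of_far h,
      sym2Map_sPerm_comm_of_far h]
  | far_tt i j h => simp [mem_advance_tau, sym2Map_sPerm_comm_of_far h]
  | r3v i j h => simp [mem_advance_tau, sym2Map_sPerm_braid h]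
  | semi i j h =>
    simp [mem_advance_tau, mem_advance_zeta, sym2Map_sPerm_braid h, sym2Map_sPerm_eq_iff,
      ← sym2Map_sPerm_sPerm_adjPair h, sym2Map_sPerm_involutive _ _]

theorem RelStrong.eraseMarked_strongEq {r₁ r₂ : List (Letter n)} (h : RelStrong n r₁ r₂)
    (M : Marking n) : StrongEq (eraseMarked r₁ M) (eraseMarked r₂ M) := by
  have h_rel := h.strongEq
  have h_refl : ∀ w : List (Letter n), StrongEq w w := Relation.EqvGen.refl
  cases h with
  | tt i => simpa only [eraseMarked_tau_cons, eraseMarked_nil] using h_rel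
  | virt i =>
    by_cases hi : 0 ∈ M (adjPair i) <;>
      simp [eraseMarked_tau_cons, eraseMarked_zeta_cons, eraseMarked_nil, mem_advance_tau, hi,
        h_rel, h_refl]
  | far_zz i j h =>
    have h' : 2 ≤ Nat.dist j i := Nat.dist_comm i j ▸ h
    have hij : adjPair i ≠ adjPair j := by
      rintro hij
      simp [adjPair_injective hij, Nat.dist_self] at h
    by_cases hi : 0 ∈ M (adjPair i) <;> by_cases hj : 0 ∈ M (adjPair j) <;>
      simp [eraseMarked_zeta_cons, eraseMarked_nil, mem_advance_zeta, hi, hj, hij, hij.symm,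
        sym2Map_sPerm_adjPair_of_far h, sym2Map_sPerm_adjPair_of_far h', h_rel, h_refl]
  | far_zt i j h =>
    by_cases hi : 0 ∈ M (adjPair i) <;>
      simp [eraseMarked_tau_cons, eraseMarked_zeta_cons, eraseMarked_nil, mem_advance_tau, hi,
        sym2Map_sPerm_adjPair_of_far h, h_rel, h_refl]
  | far_tt i j h => simpa only [eraseMarked_tau_cons, eraseMarked_nil] using h_rel
  | r3v i j h => simpa only [eraseMarked_tau_cons, eraseMarked_nil] using h_rel
  | semi i j h =>
    by_cases hj : 0 ∈ M (adjPair j) <;>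
      simp [eraseMarked_tau_cons, eraseMarked_zeta_cons, eraseMarked_nil, mem_advance_tau, hj,
        sym2Map_sPerm_sPerm_adjPair h, h_rel, h_refl]

theorem StrongEq.eraseMarked {w₁ w₂ : List (Letter n)} (h : StrongEq w₁ w₂) (M : Marking n) :
    StrongEq (eraseMarked w₁ M) (eraseMarked w₂ M) := by
  induction h with
  | rel _ _ h =>
    obtain ⟨A, B, r₁, r₂, hr, rfl, rfl⟩ := h
    simp only [eraseMarked_append, List.foldl_append, hr.foldl_advance_eq]
    exact (hr.eraseMarked_strongEq _).append_append _ _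
  | refl => exact .refl _
  | symm _ _ _ ih => exact .symm _ _ ih
  | trans _ _ _ _ _ ih₁ ih₂ => exact .trans _ _ _ ih₁ ih₂

end StrongEquivalence

section ErasePositions

open Classical in
/-- The list obtained from a list by simultaneously deleting its entries at the positions in a
set. -/
noncomputable def erasePositions {α : Type*} : List α → Set ℕ → List α
  | [], _ => []
  | a :: l, P => (if 0 ∈ P then [] else [a]) ++ erasePositions l {j | j + 1 ∈ P}

variable {α : Type*}

theorem erasePositions_empty (l : List α) : erasePositions l ∅ = l := by
  induction l with
  | nil => rfl
  | cons a l ih => simp [erasePositions, ih]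

theorem erasePositions_singleton (l : List α) (j : ℕ) : erasePositions l {j} = l.eraseIdx j := by
  induction l generalizing j with
  | nil => rfl
  | cons a l ih => cases j <;> simp [erasePositions, erasePositions_empty, ih]

theorem erasePositions_pair (l : List α) {i j : ℕ} (hij : i < j) :
    erasePositions l {i, j} = (l.eraseIdx j).eraseIdx i := by
  induction l generalizing i j with
  | nil => rfl
  | cons a l ih =>
    obtain ⟨j, rfl⟩ := Nat.exists_eq_add_one_of_ne_zero (Nat.ne_zero_of_lt hij)
    cases i with
    | zero => simp [erasePositions, erasePositions_singleton]
    | succ i =>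
      have h_pair : {k | k = i ∨ k = j} = ({i, j} : Set ℕ) := rfl
      simp [erasePositions, h_pair, ih (Nat.lt_of_succ_lt_succ hij)]

theorem delete2_eq_erasePositions {n : ℕ} (w : List (Letter n)) {i j : ℕ} (hij : i < j) :
    delete2 w i j = erasePositions w {i, j} := by
  rw [delete2, max_eq_right hij.le, min_eq_left hij.le, erasePositions_pair w hij]

end ErasePositions

section MarkingOfPositions

variable {n : ℕ}

/-- The marking which selects the classical crossings of `w` at the positions in `P`. -/
def markingOf (w : List (Letter n)) (P : Set ℕ) : Marking n := fun e =>
  crossingRank w e '' (P ∩ crossingsOf w e)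

theorem crossingRank_mem_markingOf {w : List (Letter n)} {P : Set ℕ} {e : Sym2 (Fin n)} {j : ℕ}
    (hj : j ∈ crossingsOf w e) : crossingRank w e j ∈ markingOf w P e ↔ j ∈ P := by
  rw [markingOf, (crossingRank_injOn w e).mem_image_iff Set.inter_subset_right hj]
  exact and_iff_left hj

theorem zero_mem_markingOf_cons {g : Letter n} {w : List (Letter n)} {P : Set ℕ}
    (hg : g.isZeta) : 0 ∈ markingOf (g :: w) P (adjPair g.idx) ↔ 0 ∈ P := by
  rw [← crossingRank_zero (g :: w) (adjPair g.idx),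
    crossingRank_mem_markingOf (zero_mem_crossingsOf_cons.2 ⟨hg, rfl⟩), crossingRank_zero]

theorem advance_markingOf_cons (g : Letter n) (w : List (Letter n)) (P : Set ℕ) :
    advance (markingOf (g :: w) P) g = markingOf w {j | j + 1 ∈ P} := by
  ext e k
  constructor
  · rintro ⟨j, ⟨hjP, hj⟩, h_rank⟩
    cases j with
    | zero =>
      have h_head := zero_mem_crossingsOf_cons.1 hj
      rw [sym2Map_transOf_eq_adjPair_iff] at h_head
      simp [crossingRank_zero, h_head] at h_rank
    | succ j =>
      rw [succ_mem_crossingsOf_cons, sym2Map_transOf_transOf] at hj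
      simp only [crossingRank_cons_succ, sym2Map_transOf_transOf,
        sym2Map_transOf_eq_adjPair_iff] at h_rank
      exact ⟨j, ⟨hjP, hj⟩, Nat.add_right_cancel h_rank⟩
  · rintro ⟨j, ⟨hjP, hj⟩, rfl⟩
    refine ⟨j + 1, ⟨hjP, ?_⟩, ?_⟩
    · rwa [succ_mem_crossingsOf_cons, sym2Map_transOf_transOf]
    · simp only [crossingRank_cons_succ, sym2Map_transOf_transOf, sym2Map_transOf_eq_adjPair_iff]

theorem eraseMarked_markingOf {w : List (Letter n)} {P : Set ℕ} (hP : P ⊆ ZetaPos w) :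
    eraseMarked w (markingOf w P) = erasePositions w P := by
  induction w generalizing P with
  | nil => rfl
  | cons g w ih =>
    have h_tail : {j | j + 1 ∈ P} ⊆ ZetaPos w := fun j hj => hP hj
    have isZeta_of_zero_mem (h0 : 0 ∈ P) : g.isZeta := by
      obtain ⟨e, he⟩ := exists_mem_crossingsOf (hP h0)
      exact (zero_mem_crossingsOf_cons.1 he).1
    have h_head : g.isZeta ∧ 0 ∈ markingOf (g :: w) P (adjPair g.idx) ↔ 0 ∈ P :=
      ⟨fun h => (zero_mem_markingOf_cons h.1).1 h.2, fun h0 =>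
        ⟨isZeta_of_zero_mem h0, (zero_mem_markingOf_cons (isZeta_of_zero_mem h0)).2 h0⟩⟩
    classical
    simp only [eraseMarked, erasePositions, h_head, advance_markingOf_cons, ih h_tail]

end MarkingOfPositions

section GraphIsomorphisms

theorem count_image_of_strictMonoOn {φ : ℕ → ℕ} {A : Set ℕ} [DecidablePred (· ∈ A)]
    [DecidablePred (· ∈ φ '' A)] (hφ : StrictMonoOn φ A) {j : ℕ} (hj : j ∈ A) :
    Nat.count (· ∈ φ '' A) (φ j) = Nat.count (· ∈ A) j := by
  have h_filter : {k ∈ Finset.range (φ j) | k ∈ φ '' A} = {i ∈ Finset.range j | i ∈ A}.image φ := by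
    ext k
    simp only [Finset.mem_filter, Finset.mem_range, Finset.mem_image]
    constructor
    · rintro ⟨hkj, i, hi, rfl⟩
      exact ⟨i, ⟨(hφ.lt_iff_lt hi hj).1 hkj, hi⟩, rfl⟩
    · rintro ⟨i, ⟨hij, hi⟩, rfl⟩
      exact ⟨hφ hi hj hij, i, hi, rfl⟩
  rw [Nat.count_eq_card_filter_range, Nat.count_eq_card_filter_range, h_filter,
    Finset.card_image_of_injOn (hφ.injOn.mono fun i hi => (Finset.mem_filter.1 hi).2)]

variable {n : ℕ} {w₁ w₂ : List (Letter n)} {φ : ℕ → ℕ}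

theorem IsGammaIso.lt_iff_lt (hφ : IsGammaIso w₁ w₂ φ) {i j : ℕ} {e f : Sym2 (Fin n)} {a : Fin n}
    (hi : i ∈ crossingsOf w₁ e) (hj : j ∈ crossingsOf w₁ f) (hae : a ∈ e) (haf : a ∈ f) :
    φ i < φ j ↔ i < j := by
  refine ⟨fun h => ?_, fun h => hφ.order i hi.1 j hj.1 h ⟨e, f, a, hi.2, hj.2, hae, haf⟩⟩
  by_contra! hji
  rcases hji.lt_or_eq with hlt | rfl
  · exact h.asymm (hφ.order j hj.1 i hi.1 hlt ⟨f, e, a, hj.2, hi.2, haf, hae⟩)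
  · exact h.false

theorem IsGammaIso.strictMonoOn_crossingsOf (hφ : IsGammaIso w₁ w₂ φ) (e : Sym2 (Fin n)) :
    StrictMonoOn φ (crossingsOf w₁ e) :=
  fun _ hi _ hj h => (hφ.lt_iff_lt hi hj e.out_fst_mem e.out_fst_mem).2 h

theorem IsGammaIso.apply_mem_crossingsOf_iff (hφ : IsGammaIso w₁ w₂ φ) {j : ℕ}
    (hj : j ∈ ZetaPos w₁) {e : Sym2 (Fin n)} : φ j ∈ crossingsOf w₂ e ↔ j ∈ crossingsOf w₁ e := by
  simp only [crossingsOf, Set.mem_ofPred_eq, hφ.strands j hj, hφ.maps j hj, hj]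

theorem IsGammaIso.image_crossingsOf (hφ : IsGammaIso w₁ w₂ φ) (e : Sym2 (Fin n)) :
    φ '' crossingsOf w₁ e = crossingsOf w₂ e := by
  ext k
  constructor
  · rintro ⟨j, hj, rfl⟩
    exact (hφ.apply_mem_crossingsOf_iff hj.1).2 hj
  · intro hk
    obtain ⟨j, hj, rfl⟩ := hφ.surj k hk.1
    exact ⟨j, (hφ.apply_mem_crossingsOf_iff hj).1 hk, rfl⟩

theorem IsGammaIso.crossingRank_apply (hφ : IsGammaIso w₁ w₂ φ) {e : Sym2 (Fin n)} {j : ℕ}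
    (hj : j ∈ crossingsOf w₁ e) : crossingRank w₂ e (φ j) = crossingRank w₁ e j := by
  classical
  rw [crossingRank, ← hφ.image_crossingsOf]
  exact count_image_of_strictMonoOn (hφ.strictMonoOn_crossingsOf e) hj

theorem IsGammaIso.markingOf_image (hφ : IsGammaIso w₁ w₂ φ) {P : Set ℕ} (hP : P ⊆ ZetaPos w₁) :
    markingOf w₂ (φ '' P) = markingOf w₁ P := by
  funext e
  have h_inter : φ '' P ∩ crossingsOf w₂ e = φ '' (P ∩ crossingsOf w₁ e) := by
    ext k
    constructor
    · rintro ⟨⟨j, hj, rfl⟩, hk⟩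
      exact ⟨j, ⟨hj, (hφ.apply_mem_crossingsOf_iff (hP hj)).1 hk⟩, rfl⟩
    · rintro ⟨j, ⟨hjP, hj⟩, rfl⟩
      exact ⟨⟨j, hjP, rfl⟩, (hφ.apply_mem_crossingsOf_iff hj.1).2 hj⟩
  rw [markingOf, markingOf, h_inter, Set.image_image]
  exact Set.image_congr fun j hj => hφ.crossingRank_apply hj.2

theorem StrongEq.erasePositions_image (h : StrongEq w₁ w₂) (hφ : IsGammaIso w₁ w₂ φ) {P : Set ℕ}
    (hP : P ⊆ ZetaPos w₁) : StrongEq (erasePositions w₁ P) (erasePositions w₂ (φ '' P)) := by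
  have hφP : φ '' P ⊆ ZetaPos w₂ := Set.image_subset_iff.2 fun j hj => hφ.maps j (hP hj)
  rw [← eraseMarked_markingOf hP, ← eraseMarked_markingOf hφP, hφ.markingOf_image hP]
  exact h.eraseMarked _

theorem isBigon_iff {w : List (Letter n)} {i j : ℕ} :
    IsBigon w i j ↔ i < j ∧ ∃ e, i ∈ crossingsOf w e ∧ j ∈ crossingsOf w e ∧
      ∀ k f, i < k → k < j → k ∈ crossingsOf w f → ∀ a ∈ e, a ∉ f := by
  constructor
  · rintro ⟨hij, hi, hj, hs, h_between⟩
    obtain ⟨e, hie⟩ := exists_mem_crossingsOf hi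
    exact ⟨hij, e, hie, ⟨hj, hs ▸ hie.2⟩, fun k f hik hkj hk =>
      h_between k hik hkj hk.1 e f hie.2 hk.2⟩
  · rintro ⟨hij, e, hi, hj, h_between⟩
    refine ⟨hij, hi.1, hj.1, hi.2.trans hj.2.symm, fun k hik hkj hk e' f he' hf => ?_⟩
    obtain rfl : e = e' := Option.some.inj (hi.2.symm.trans he')
    exact h_between k f hik hkj ⟨hk, hf⟩

theorem IsBigon.map (hφ : IsGammaIso w₁ w₂ φ) {i j : ℕ} (h : IsBigon w₁ i j) :
    IsBigon w₂ (φ i) (φ j) := by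
  obtain ⟨hij, e, hi, hj, h_between⟩ := isBigon_iff.1 h
  refine isBigon_iff.2 ⟨hφ.strictMonoOn_crossingsOf e hi hj hij, e,
    (hφ.apply_mem_crossingsOf_iff hi.1).2 hi, (hφ.apply_mem_crossingsOf_iff hj.1).2 hj, ?_⟩
  intro m f him hmj hm a hae haf
  obtain ⟨k, hk, rfl⟩ := (hφ.image_crossingsOf f).ge hm
  exact h_between k f ((hφ.lt_iff_lt hi hk hae haf).1 him) ((hφ.lt_iff_lt hk hj haf hae).1 hmj)
    hk a hae haf

end GraphIsomorphisms

/-- if `β₁, β₂` are strongly equivalent and `u = φ` is the induced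
bijection of classical crossings, then bigons map to bigons, and the corresponding
bigon reductions produce strongly equivalent words. -/
theorem bigon_transported (n : ℕ) (w1 w2 : List (Letter n)) (φ : ℕ → ℕ)
    (hse : StrongEq w1 w2) (hφ : IsGammaIso w1 w2 φ)
    (j1 j2 : ℕ) (h : IsBigon w1 j1 j2) :
    IsBigon w2 (φ j1) (φ j2) ∧
    StrongEq (delete2 w1 j1 j2) (delete2 w2 (φ j1) (φ j2)) := by
  have h' : IsBigon w2 (φ j1) (φ j2) := h.map hφ
  obtain ⟨hlt, h1, h2, -⟩ := h
  refine ⟨h', ?_⟩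
  rw [delete2_eq_erasePositions w1 hlt, delete2_eq_erasePositions w2 h'.1, ← Set.image_pair]
  exact hse.erasePositions_image hφ (Set.pair_subset h1 h2)

end OneTermBracket
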